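/- arXiv:1102.0748 — 2 statements merged into one kernel-verified Lean document; each statement's English description precedes it below -/
import Mathlib

section
/- For every n ≥ 1 and k ≥ 0, r_{n,k} = ∑ b_{|V_1|/2, k_1} ⋯ b_{|V_ℓ|/2, k_ℓ}, where the sum is over all non-crossing partitions {V_1,…,V_ℓ} of {1,…,2n} all of whose blocks have even size, together with all tuples of nonnegative integers (k_1,…,k_ℓ) with k_1 + ⋯ + k_ℓ = k. -/
open scoped Classical

/-- Asymmetric crossing of two chords: `B = {a,b}` with `a < b` starts strictly
before `C = {c,d}` and they interleave: `a < c < b < d`. -/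
def CrossAsym (B C : Finset ℕ) : Prop :=
  ∃ a b c d : ℕ, a < c ∧ c < b ∧ b < d ∧ B = {a, b} ∧ C = {c, d}

/-- Two blocks cross: `a < c < b < d` or `c < a < d < b`. -/
def Crosses (B C : Finset ℕ) : Prop := CrossAsym B C ∨ CrossAsym C B

/-- A pairing on `[2n] = {1, …, 2n}`: a partition of `{1, …, 2n}` into blocks of size 2. -/
def IsPairing (n : ℕ) (π : Finset (Finset ℕ)) : Prop :=
  (∀ B ∈ π, B.card = 2 ∧ B ⊆ Finset.Icc 1 (2 * n)) ∧
  (∀ x ∈ Finset.Icc 1 (2 * n), ∃! B, B ∈ π ∧ x ∈ B)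

/-- Number of crossings of a pairing: the number of unordered pairs of blocks that cross
(each crossing unordered pair `{B, C}` satisfies the asymmetric condition exactly once). -/
noncomputable def crNum (π : Finset (Finset ℕ)) : ℕ :=
  Set.ncard {p : Finset ℕ × Finset ℕ | p.1 ∈ π ∧ p.2 ∈ π ∧ CrossAsym p.1 p.2}

/-- A pairing is parity-reversing if each block consists of one odd and one even number. -/
def ParityReversing (π : Finset (Finset ℕ)) : Prop :=
  ∀ B ∈ π, ∃ a b : ℕ, B = {a, b} ∧ Odd a ∧ Even b

/-- A pairing is connected if its blocks cannot be split into two nonempty families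
with no crossing between the families. -/
def ConnectedPairing (π : Finset (Finset ℕ)) : Prop :=
  ¬ ∃ S T : Finset (Finset ℕ), S ∪ T = π ∧ Disjoint S T ∧ S.Nonempty ∧ T.Nonempty ∧
      ∀ B ∈ S, ∀ C ∈ T, ¬ Crosses B C

/-- `tCount n k`: the number of pairings on `[2n]` with exactly `k` crossings. -/
noncomputable def tCount (n k : ℕ) : ℕ :=
  Set.ncard {π : Finset (Finset ℕ) | IsPairing n π ∧ crNum π = k}

/-- `rCount n k`: the number of parity-reversing pairings on `[2n]` with exactly `k` crossings. -/
noncomputable def rCount (n k : ℕ) : ℕ :=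
  Set.ncard {π : Finset (Finset ℕ) | IsPairing n π ∧ ParityReversing π ∧ crNum π = k}

/-- `bCount n k`: the number of connected parity-reversing pairings on `[2n]`
with exactly `k` crossings. -/
noncomputable def bCount (n k : ℕ) : ℕ :=
  Set.ncard {π : Finset (Finset ℕ) |
    IsPairing n π ∧ ParityReversing π ∧ ConnectedPairing π ∧ crNum π = k}

/-- `bTot n`: the number of connected parity-reversing pairings on `[2n]` (equals 1 for `n = 0`). -/
noncomputable def bTot (n : ℕ) : ℕ :=
  Set.ncard {π : Finset (Finset ℕ) |
    IsPairing n π ∧ ParityReversing π ∧ ConnectedPairing π}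

/-- The Touchard alternating sum `∑_{k=-n}^n (-1)^k q^{k(k-1)/2} C(2n, n+k)`. -/
noncomputable def touchardSum (n : ℕ) (q : ℂ) : ℂ :=
  ∑ k ∈ Finset.Icc (-(n : ℤ)) (n : ℤ),
    (-1 : ℂ) ^ k * q ^ ((k * (k - 1)) / 2).toNat * ((2 * n).choose ((n : ℤ) + k).toNat : ℂ)

/-- `T_n(q) = ∑_k t_{n,k} q^k` as a complex polynomial function
(all crossing numbers of pairings on `[2n]` satisfy `k ≤ n*n`). -/
noncomputable def Tpoly (n : ℕ) (q : ℂ) : ℂ :=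
  ∑ k ∈ Finset.range (n * n + 1), (tCount n k : ℂ) * q ^ k

/-- `T_n(q) = ∑_k t_{n,k} q^k` as a real polynomial function. -/
noncomputable def TpolyR (n : ℕ) (q : ℝ) : ℝ :=
  ∑ k ∈ Finset.range (n * n + 1), (tCount n k : ℝ) * q ^ k

/-- `R_n(q) = ∑_k r_{n,k} q^k` as a real polynomial function. -/
noncomputable def RpolyR (n : ℕ) (q : ℝ) : ℝ :=
  ∑ k ∈ Finset.range (n * n + 1), (rCount n k : ℝ) * q ^ k

/-- Non-crossing partitions of `{1, …, 2n}` all of whose blocks have even size. -/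
noncomputable def NCEvenPartitions (n : ℕ) : Finset (Finset (Finset ℕ)) :=
  ((Finset.Icc 1 (2 * n)).powerset.powerset).filter (fun π =>
    (∀ B ∈ π, B.Nonempty ∧ Even B.card) ∧
    (∀ x ∈ Finset.Icc 1 (2 * n), ∃! B, B ∈ π ∧ x ∈ B) ∧
    ¬ ∃ a b c d : ℕ, a < b ∧ b < c ∧ c < d ∧
        ∃ B ∈ π, ∃ C ∈ π, B ≠ C ∧ a ∈ B ∧ c ∈ B ∧ b ∈ C ∧ d ∈ C)

def PO (V : Finset ℕ) (π : Finset (Finset ℕ)) : Prop :=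
  (∀ B ∈ π, B.card = 2 ∧ B ⊆ V) ∧ (∀ x ∈ V, ∃! B, B ∈ π ∧ x ∈ B)

lemma pair_of_card2 {B : Finset ℕ} (h : B.card = 2) : ∃ x y, x < y ∧ B = {x, y} := by
  obtain ⟨x, y, hxy, rfl⟩ := Finset.card_eq_two.1 h
  rcases lt_or_gt_of_ne hxy with h | h
  · exact ⟨x, y, h, rfl⟩
  · exact ⟨y, x, h, Finset.pair_comm _ _⟩

lemma pair_inj {x y a b : ℕ} (h : x < y) (h' : a < b) (e : ({x, y} : Finset ℕ) = {a, b}) :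
    x = a ∧ y = b := by
  have h1 : x ∈ ({a, b} : Finset ℕ) := by rw [← e]; simp
  have h2 : y ∈ ({a, b} : Finset ℕ) := by rw [← e]; simp
  have h3 : a ∈ ({x, y} : Finset ℕ) := by rw [e]; simp
  have h4 : b ∈ ({x, y} : Finset ℕ) := by rw [e]; simp
  simp only [Finset.mem_insert, Finset.mem_singleton] at h1 h2 h3 h4
  omega

lemma crossAsym_iff {x y u v : ℕ} (h : x < y) (h' : u < v) :
    CrossAsym {x, y} {u, v} ↔ x < u ∧ u < y ∧ y < v := by
  constructor
  · rintro ⟨a, b, c, d, h1, h2, h3, e1, e2⟩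
    obtain ⟨rfl, rfl⟩ := pair_inj h (h1.trans h2) e1
    obtain ⟨rfl, rfl⟩ := pair_inj h' (h2.trans h3) e2
    exact ⟨h1, h2, h3⟩
  · rintro ⟨h1, h2, h3⟩
    exact ⟨x, y, u, v, h1, h2, h3, rfl, rfl⟩

lemma crosses_symm {B C : Finset ℕ} (h : Crosses B C) : Crosses C B := Or.symm h

lemma conn_iff (σ : Finset (Finset ℕ)) : ConnectedPairing σ ↔ ∀ p : Finset ℕ → Prop,
    (∀ B ∈ σ, ∀ C ∈ σ, p B → ¬ p C → ¬ Crosses B C) → ∀ B ∈ σ, ∀ C ∈ σ, p B → p C := by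
  constructor
  · intro h p hp B hB C hC hpB
    by_contra hpC
    apply h
    refine ⟨σ.filter p, σ.filter (fun x => ¬ p x), Finset.filter_union_filter_not_eq _ _,
      Finset.disjoint_filter_filter_not _ _ _, ⟨B, by simp [*]⟩, ⟨C, by simp [*]⟩, ?_⟩
    intro B hB C hC
    simp only [Finset.mem_filter] at hB hC
    exact hp B hB.1 C hC.1 hB.2 hC.2
  · rintro h ⟨S, T, rfl, hd, ⟨B, hB⟩, ⟨C, hC⟩, hST⟩
    have := h (fun x => x ∈ S) (by
      intro B hB C hC h1 h2
      exact hST B h1 C ((Finset.mem_union.1 hC).resolve_left h2)) B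
      (Finset.mem_union_left _ hB) C (Finset.mem_union_right _ hC) hB
    exact Finset.disjoint_left.1 hd this hC

noncomputable def XX (π : Finset (Finset ℕ)) : Finset (Finset ℕ × Finset ℕ) :=
  (π ×ˢ π).filter (fun p => CrossAsym p.1 p.2)

lemma crNum_eq (π : Finset (Finset ℕ)) : crNum π = (XX π).card := by
  rw [crNum, ← Set.ncard_coe_finset]
  congr 1
  ext p
  simp [XX, and_assoc]

noncomputable def SS (V : Finset ℕ) (j : ℕ) : Finset (Finset (Finset ℕ)) :=
  V.powerset.powerset.filter (fun π => PO V π ∧ ParityReversing π ∧ ConnectedPairing π ∧ crNum π = j)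

lemma PO.mem_pow {V : Finset ℕ} {π : Finset (Finset ℕ)} (h : PO V π) : π ∈ V.powerset.powerset := by
  simp only [Finset.mem_powerset]
  intro B hB
  exact Finset.mem_powerset.2 (h.1 B hB).2

lemma mem_SS {V : Finset ℕ} {j : ℕ} {π : Finset (Finset ℕ)} :
    π ∈ SS V j ↔ PO V π ∧ ParityReversing π ∧ ConnectedPairing π ∧ crNum π = j := by
  rw [SS, Finset.mem_filter]
  exact ⟨fun h => h.2, fun h => ⟨h.1.mem_pow, h⟩⟩

lemma bCount_eq (n j : ℕ) : bCount n j = (SS (Finset.Icc 1 (2 * n)) j).card := by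
  rw [bCount, ← Set.ncard_coe_finset]
  congr 1
  ext p
  simp only [Set.mem_ofPred_eq, Finset.mem_coe, mem_SS]
  rfl

/-! transport -/

lemma image_injOn {V : Finset ℕ} {e : ℕ → ℕ} (he : Set.InjOn e V) {B C : Finset ℕ}
    (hB : B ⊆ V) (hC : C ⊆ V) (h : B.image e = C.image e) : B = C := by
  have key : ∀ B C : Finset ℕ, B ⊆ V → C ⊆ V → B.image e = C.image e → B ⊆ C := by
    intro B C hB hC h x hx
    have : e x ∈ C.image e := h ▸ Finset.mem_image_of_mem e hx
    obtain ⟨y, hy, hxy⟩ := Finset.mem_image.1 this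
    rwa [← he (hC hy) (hB hx) hxy]
  exact (key B C hB hC h).antisymm (key C B hC hB h.symm)

lemma cross_image {V : Finset ℕ} {e : ℕ → ℕ} (he : StrictMonoOn e V) {B C : Finset ℕ}
    (hB : B.card = 2 ∧ B ⊆ V) (hC : C.card = 2 ∧ C ⊆ V) :
    CrossAsym (B.image e) (C.image e) ↔ CrossAsym B C := by
  obtain ⟨x, y, hxy, rfl⟩ := pair_of_card2 hB.1
  obtain ⟨u, v, huv, rfl⟩ := pair_of_card2 hC.1
  have hx : x ∈ V := hB.2 (by simp)
  have hy : y ∈ V := hB.2 (by simp)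
  have hu : u ∈ V := hC.2 (by simp)
  have hv : v ∈ V := hC.2 (by simp)
  simp only [Finset.image_insert, Finset.image_singleton]
  rw [crossAsym_iff (he hx hy hxy) (he hu hv huv), crossAsym_iff hxy huv,
    he.lt_iff_lt hx hu, he.lt_iff_lt hu hy, he.lt_iff_lt hy hv]

lemma SS_card_le {V W : Finset ℕ} {e : ℕ → ℕ} (he : StrictMonoOn e V) (hW : V.image e = W)
    (hp : ∀ x ∈ V, ∀ y ∈ V, (Odd (x + y) → Odd (e x + e y))) (j : ℕ) :
    (SS V j).card ≤ (SS W j).card := by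
  have inj : Set.InjOn e V := he.injOn
  apply Finset.card_le_card_of_injOn (fun ρ => ρ.image (fun B => B.image e))
  · intro ρ hρ
    rw [Finset.mem_coe, mem_SS] at hρ
    obtain ⟨hPO, hpr, hco, hcr⟩ := hρ
    simp only [Finset.mem_coe, mem_SS]
    refine ⟨⟨?_, ?_⟩, ?_, ?_, ?_⟩
    · intro B hB
      obtain ⟨A, hA, rfl⟩ := Finset.mem_image.1 hB
      have := hPO.1 A hA
      refine ⟨?_, ?_⟩
      · rw [Finset.card_image_of_injOn (inj.mono (by exact_mod_cast this.2))]; exact this.1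
      · rw [← hW]; exact Finset.image_subset_image this.2
    · intro y hy
      rw [← hW] at hy
      obtain ⟨x, hx, rfl⟩ := Finset.mem_image.1 hy
      obtain ⟨B, ⟨hB, hxB⟩, hu⟩ := hPO.2 x hx
      refine ⟨B.image e, ⟨Finset.mem_image_of_mem _ hB, Finset.mem_image_of_mem _ hxB⟩, ?_⟩
      rintro C ⟨hC, hxC⟩
      obtain ⟨A, hA, rfl⟩ := Finset.mem_image.1 hC
      obtain ⟨z, hz, hzx⟩ := Finset.mem_image.1 hxC
      have := inj ((hPO.1 A hA).2 hz) hx hzx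
      subst this
      rw [hu A ⟨hA, hz⟩]
    · intro B hB
      obtain ⟨A, hA, rfl⟩ := Finset.mem_image.1 hB
      obtain ⟨a, b, rfl, ha, hb⟩ := hpr A hA
      have h1 := (hPO.1 _ hA).2
      have := hp a (h1 (by simp)) b (h1 (by simp)) (ha.add_even hb)
      rcases Nat.even_or_odd (e a) with h | h
      · refine ⟨e b, e a, by simp [Finset.pair_comm], ?_, h⟩
        grind
      · refine ⟨e a, e b, by simp, h, ?_⟩
        grind
    · rw [conn_iff] at hco ⊢
      intro p hpp
      simp only [Finset.forall_mem_image] at hpp ⊢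
      intro B hB C hC
      refine hco (fun B => p (B.image e)) ?_ B hB C hC
      intro B hB C hC h1 h2 h3
      refine hpp hB hC h1 h2 ?_
      rcases h3 with h3 | h3
      · exact Or.inl ((cross_image he (hPO.1 _ hB) (hPO.1 _ hC)).2 h3)
      · exact Or.inr ((cross_image he (hPO.1 _ hC) (hPO.1 _ hB)).2 h3)
    · rw [← hcr, crNum_eq, crNum_eq]
      symm
      apply Finset.card_nbij (fun p => (p.1.image e, p.2.image e))
      · rintro ⟨B, C⟩ h
        simp only [XX, Finset.coe_filter, Finset.mem_filter, Finset.mem_product, Set.mem_ofPred_eq] at h ⊢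
        exact ⟨⟨Finset.mem_image_of_mem _ h.1.1, Finset.mem_image_of_mem _ h.1.2⟩,
          (cross_image he (hPO.1 _ h.1.1) (hPO.1 _ h.1.2)).2 h.2⟩
      · rintro ⟨B, C⟩ h ⟨B', C'⟩ h' hh
        simp only [XX, Finset.coe_filter, Finset.mem_product, Set.mem_ofPred_eq] at h h'
        simp only [Prod.mk.injEq] at hh ⊢
        exact ⟨image_injOn inj (hPO.1 _ h.1.1).2 (hPO.1 _ h'.1.1).2 hh.1,
          image_injOn inj (hPO.1 _ h.1.2).2 (hPO.1 _ h'.1.2).2 hh.2⟩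
      · rintro ⟨B, C⟩ h
        simp only [XX, Finset.coe_filter, Finset.mem_product, Set.mem_ofPred_eq] at h
        obtain ⟨⟨h1, h2⟩, h3⟩ := h
        obtain ⟨A, hA, rfl⟩ := Finset.mem_image.1 h1
        obtain ⟨D, hD, rfl⟩ := Finset.mem_image.1 h2
        refine ⟨(A, D), ?_, rfl⟩
        simp only [XX, Finset.coe_filter, Finset.mem_product, Set.mem_ofPred_eq]
        exact ⟨⟨hA, hD⟩, (cross_image he (hPO.1 _ hA) (hPO.1 _ hD)).1 h3⟩
  · have key : ∀ ρ ∈ SS V j, ∀ τ ∈ SS V j, ρ.image (fun B => B.image e) = τ.image (fun B => B.image e) → ρ ⊆ τ := by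
      intro ρ hρ τ hτ h B hB
      have : B.image e ∈ τ.image (fun B => B.image e) := h ▸ Finset.mem_image_of_mem _ hB
      obtain ⟨C, hC, hCB⟩ := Finset.mem_image.1 this
      rw [mem_SS] at hρ hτ
      rwa [← image_injOn inj (hτ.1.1 _ hC).2 (hρ.1.1 _ hB).2 hCB]
    intro ρ hρ τ hτ h
    exact (key ρ hρ τ hτ h).antisymm (key τ hτ ρ hρ h.symm)

lemma SS_card_eq {V W : Finset ℕ} {e : ℕ → ℕ} (he : StrictMonoOn e V) (hW : V.image e = W)
    (hp : ∀ x ∈ V, ∀ y ∈ V, (Odd (x + y) ↔ Odd (e x + e y))) (j : ℕ) :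
    (SS V j).card = (SS W j).card := by
  apply le_antisymm (SS_card_le he hW (fun x hx y hy => (hp x hx y hy).1) j)
  have hg : ∀ y : ℕ, ∃ x, y ∈ W → x ∈ V ∧ e x = y := by
    intro y
    by_cases h : y ∈ W
    · rw [← hW] at h
      obtain ⟨x, hx⟩ := Finset.mem_image.1 h
      exact ⟨x, fun _ => hx⟩
    · exact ⟨0, fun h' => absurd h' h⟩
  choose g hg using hg
  refine SS_card_le (e := g) ?_ ?_ ?_ j
  · intro a ha b hb hab
    rw [← he.lt_iff_lt (hg a ha).1 (hg b hb).1, (hg a ha).2, (hg b hb).2]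
    exact hab
  · ext x
    simp only [Finset.mem_image]
    constructor
    · rintro ⟨y, hy, rfl⟩
      exact (hg y hy).1
    · intro hx
      have : e x ∈ W := hW ▸ Finset.mem_image_of_mem e hx
      exact ⟨e x, this, he.injOn (hg _ this).1 hx (hg _ this).2⟩
  · intro x hx y hy h
    rw [hp _ (hg x hx).1 _ (hg y hy).1, (hg x hx).2, (hg y hy).2]
    exact h

/-! parity of blocks -/

structure NC (n : ℕ) (P : Finset (Finset ℕ)) : Prop where
  sub : ∀ V ∈ P, V ⊆ Finset.Icc 1 (2 * n)
  ne : ∀ V ∈ P, V.Nonempty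
  ev : ∀ V ∈ P, Even V.card
  ex : ∀ x ∈ Finset.Icc 1 (2 * n), ∃ V ∈ P, x ∈ V
  un : ∀ V ∈ P, ∀ W ∈ P, ∀ x, x ∈ V → x ∈ W → V = W
  nc : ∀ V ∈ P, ∀ W ∈ P, ∀ a b c d, a < b → b < c → c < d → a ∈ V → c ∈ V → b ∈ W → d ∈ W → V = W

lemma mem_filter_any {α : Type} {p : α → Prop} {d : DecidablePred p} {s : Finset α} {a : α} :
    a ∈ @Finset.filter α p d s ↔ a ∈ s ∧ p a := Finset.mem_filter

lemma mem_NCE {n : ℕ} {P : Finset (Finset ℕ)} : P ∈ NCEvenPartitions n ↔ NC n P := by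
  unfold NCEvenPartitions
  refine Iff.trans mem_filter_any ?_
  constructor
  · rintro ⟨h1, h2, h3, h4⟩
    have hs : ∀ V ∈ P, V ⊆ Finset.Icc 1 (2 * n) := by
      intro V hV
      exact Finset.mem_powerset.1 (Finset.mem_powerset.1 h1 hV)
    refine ⟨hs, fun V hV => (h2 V hV).1, fun V hV => (h2 V hV).2, fun x hx => ?_, ?_, ?_⟩
    · obtain ⟨B, hB, -⟩ := h3 x hx
      exact ⟨B, hB⟩
    · intro V hV W hW x hxV hxW
      exact (h3 x (hs V hV hxV)).unique ⟨hV, hxV⟩ ⟨hW, hxW⟩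
    · intro V hV W hW a b c d h5 h6 h7 h8 h9 h10 h11
      by_contra hne
      exact h4 ⟨a, b, c, d, h5, h6, h7, V, hV, W, hW, hne, h8, h9, h10, h11⟩
  · intro h
    refine ⟨?_, fun V hV => ⟨h.ne V hV, h.ev V hV⟩, ?_, ?_⟩
    · rw [Finset.mem_powerset]
      intro V hV
      exact Finset.mem_powerset.2 (h.sub V hV)
    · intro x hx
      obtain ⟨V, hV, hxV⟩ := h.ex x hx
      exact ⟨V, ⟨hV, hxV⟩, fun W hW => h.un W hW.1 V hV x hW.2 hxV⟩
    · rintro ⟨a, b, c, d, h1, h2, h3, V, hV, W, hW, hne, h4, h5, h6, h7⟩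
      exact hne (h.nc V hV W hW a b c d h1 h2 h3 h4 h5 h6 h7)

lemma NC.parity {n : ℕ} {P : Finset (Finset ℕ)} (h : NC n P) {V : Finset ℕ} (hV : V ∈ P)
    {x y : ℕ} (hx : x ∈ V) (hy : y ∈ V) (hxy : x < y) :
    (V ∩ Finset.Ioc x y).card % 2 = (y - x) % 2 := by
  have h1 : Finset.Ioc x y = P.biUnion (fun W => W ∩ Finset.Ioc x y) := by
    ext z
    simp only [Finset.mem_biUnion, Finset.mem_inter]
    constructor
    · intro hz
      have hx' := h.sub V hV hx
      have hy' := h.sub V hV hy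
      obtain ⟨W, hW, hzW⟩ := h.ex z (by
        simp only [Finset.mem_Icc, Finset.mem_Ioc] at *; omega)
      exact ⟨W, hW, hzW, hz⟩
    · rintro ⟨W, hW, hzW, hz⟩; exact hz
  have h2 : (y - x) = ∑ W ∈ P, (W ∩ Finset.Ioc x y).card := by
    rw [← Finset.card_biUnion, ← h1, Nat.card_Ioc]
    intro A hA B hB hAB
    refine Finset.disjoint_left.2 ?_
    intro z hz hz'
    exact hAB (h.un A hA B hB z (Finset.mem_inter.1 hz).1 (Finset.mem_inter.1 hz').1)
  rw [h2, ← Finset.add_sum_erase P _ hV]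
  have h3 : Even (∑ W ∈ P.erase V, (W ∩ Finset.Ioc x y).card) := by
    apply Finset.even_sum
    intro W hW
    obtain ⟨hne, hW⟩ := Finset.mem_erase.1 hW
    rcases Finset.eq_empty_or_nonempty (W ∩ Finset.Ioc x y) with h0 | ⟨w, hw⟩
    · rw [h0]; simp
    · have : W ∩ Finset.Ioc x y = W := by
        rw [Finset.inter_eq_left]
        obtain ⟨hw1, hw2⟩ := Finset.mem_inter.1 hw
        intro z hz
        have e1 : w ≠ y := fun e => hne (h.un W hW V hV y (e ▸ hw1) hy)
        have e2 : z ≠ y := fun e => hne (h.un W hW V hV y (e ▸ hz) hy)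
        have e3 : z ≠ x := fun e => hne (h.un W hW V hV x (e ▸ hz) hx)
        rw [Finset.mem_Ioc] at hw2 ⊢
        by_contra hcon
        rcases lt_or_ge z x with hl | hl
        · exact hne (h.nc W hW V hV z x w y hl (by omega) (by omega) hz hw1 hx hy)
        · exact hne (h.nc V hV W hW x w y z (by omega) (by omega) (by omega) hx hy hw1 hz).symm
      rw [this]; exact h.ev W hW
  obtain ⟨m, hm⟩ := h3
  omega

lemma SS_card {n : ℕ} {P : Finset (Finset ℕ)} (h : NC n P) {V : Finset ℕ} (hV : V ∈ P) (j : ℕ) :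
    (SS V j).card = bCount (V.card / 2) j := by
  rw [bCount_eq]
  have hcard : 2 * (V.card / 2) = V.card := Nat.two_mul_div_two_of_even (h.ev V hV)
  rw [hcard]
  have hstep : ∀ x y, x < y → (V.filter (· ≤ y)).card = (V.filter (· ≤ x)).card + (V ∩ Finset.Ioc x y).card := by
    intro x y hxy
    rw [← Finset.card_union_of_disjoint]
    · congr 1
      ext z
      simp only [Finset.mem_filter, Finset.mem_union, Finset.mem_inter, Finset.mem_Ioc]
      constructor
      · rintro ⟨h1, h2⟩
        by_cases hz : z ≤ x
        · exact Or.inl ⟨h1, hz⟩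
        · exact Or.inr ⟨h1, by omega, h2⟩
      · rintro (⟨h1, h2⟩ | ⟨h1, h2, h3⟩)
        · exact ⟨h1, by omega⟩
        · exact ⟨h1, h3⟩
    · rw [Finset.disjoint_left]
      intro z hz hz'
      simp only [Finset.mem_filter, Finset.mem_inter, Finset.mem_Ioc] at hz hz'
      omega
  have hmono : StrictMonoOn (fun x => (V.filter (· ≤ x)).card) V := by
    intro x hx y hy hxy
    have : 0 < (V ∩ Finset.Ioc x y).card := Finset.card_pos.2 ⟨y, by simp [hxy]; exact hy⟩
    have := hstep x y hxy
    simp only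
    omega
  refine SS_card_eq (e := fun x => (V.filter (· ≤ x)).card) hmono ?_ ?_ j
  · apply Finset.eq_of_subset_of_card_le
    · intro y hy
      obtain ⟨x, hx, rfl⟩ := Finset.mem_image.1 hy
      rw [Finset.mem_Icc]
      exact ⟨Finset.card_pos.2 ⟨x, by simp [hx]⟩, Finset.card_filter_le _ _⟩
    · rw [Finset.card_image_of_injOn hmono.injOn]; simp
  · have key : ∀ x ∈ V, ∀ y ∈ V, x < y → (Odd (x + y) ↔ Odd ((V.filter (· ≤ x)).card + (V.filter (· ≤ y)).card)) := by
      intro x hx y hy hxy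
      have h1 := hstep x y hxy
      have h2 := h.parity hV hx hy hxy
      rw [Nat.odd_iff, Nat.odd_iff]
      omega
    intro x hx y hy
    rcases lt_trichotomy x y with hl | hl | hl
    · exact key x hx y hy hl
    · subst hl
      rw [Nat.odd_iff, Nat.odd_iff]; omega
    · have h2 := key y hy x hx hl
      rw [Nat.odd_iff, Nat.odd_iff] at h2 ⊢
      omega

/-! components -/

noncomputable def res (π : Finset (Finset ℕ)) (V : Finset ℕ) : Finset (Finset ℕ) :=
  π.filter (fun B => B ⊆ V)

lemma mem_res {π : Finset (Finset ℕ)} {V B : Finset ℕ} : B ∈ res π V ↔ B ∈ π ∧ B ⊆ V := by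
  simp [res]

structure QQ (n : ℕ) (π P : Finset (Finset ℕ)) : Prop where
  nc : NC n P
  sub : ∀ B ∈ π, ∃ V ∈ P, B ⊆ V
  conn : ∀ V ∈ P, ConnectedPairing (res π V)

lemma NC.no_crossA {n : ℕ} {P : Finset (Finset ℕ)} (h : NC n P) {V W B C : Finset ℕ}
    (hV : V ∈ P) (hW : W ∈ P) (hB : B ⊆ V) (hC : C ⊆ W) (hc : CrossAsym B C) : V = W := by
  obtain ⟨a, b, c, d, h1, h2, h3, rfl, rfl⟩ := hc
  exact h.nc V hV W hW a c b d h1 h2 h3 (hB (by simp)) (hB (by simp)) (hC (by simp)) (hC (by simp))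

lemma NC.no_cross {n : ℕ} {P : Finset (Finset ℕ)} (h : NC n P) {V W B C : Finset ℕ}
    (hV : V ∈ P) (hW : W ∈ P) (hB : B ⊆ V) (hC : C ⊆ W) (hc : Crosses B C) : V = W := by
  rcases hc with hc | hc
  · exact h.no_crossA hV hW hB hC hc
  · exact (h.no_crossA hW hV hC hB hc).symm

lemma ne_of_card2 {B : Finset ℕ} (h : B.card = 2) : B.Nonempty := Finset.card_pos.1 (by omega)

lemma NC.sub_eq {n : ℕ} {P : Finset (Finset ℕ)} (h : NC n P) {V W B : Finset ℕ}
    (hV : V ∈ P) (hW : W ∈ P) (hc : B.card = 2) (hB : B ⊆ V) (hC : B ⊆ W) : V = W := by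
  obtain ⟨x, hx⟩ := ne_of_card2 hc
  exact h.un V hV W hW x (hB hx) (hC hx)

lemma QQ.PO_res {n : ℕ} {π P : Finset (Finset ℕ)} (hπ : PO (Finset.Icc 1 (2 * n)) π)
    (h : QQ n π P) {V : Finset ℕ} (hV : V ∈ P) : PO V (res π V) := by
  refine ⟨fun B hB => ?_, fun x hx => ?_⟩
  · rw [mem_res] at hB
    exact ⟨(hπ.1 B hB.1).1, hB.2⟩
  · obtain ⟨B, ⟨hB, hxB⟩, hu⟩ := hπ.2 x (h.nc.sub V hV hx)
    obtain ⟨W, hW, hBW⟩ := h.sub B hB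
    obtain rfl := h.nc.un V hV W hW x hx (hBW hxB)
    refine ⟨B, ⟨mem_res.2 ⟨hB, hBW⟩, hxB⟩, fun C hC => hu C ⟨(mem_res.1 hC.1).1, hC.2⟩⟩

lemma QQ.subset {n : ℕ} {π P P' : Finset (Finset ℕ)} (hπ : PO (Finset.Icc 1 (2 * n)) π)
    (h : QQ n π P) (h' : QQ n π P') {V V' B : Finset ℕ} (hV : V ∈ P) (hV' : V' ∈ P')
    (hB : B ∈ π) (hBV : B ⊆ V) (hBV' : B ⊆ V') : V ⊆ V' := by
  have hc := (conn_iff _).1 (h.conn V hV) (fun C => C ⊆ V') (by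
    intro C hC D hD h1 h2 h3
    rw [mem_res] at hC hD
    obtain ⟨W, hW, hDW⟩ := h'.sub D hD.1
    obtain rfl := h'.nc.no_cross hV' hW h1 hDW h3
    exact h2 hDW) B (mem_res.2 ⟨hB, hBV⟩)
  intro x hx
  obtain ⟨C, ⟨hC, hxC⟩, -⟩ := (h.PO_res hπ hV).2 x hx
  exact hc C hC hBV' hxC

lemma QQ.unique_sub {n : ℕ} {π P P' : Finset (Finset ℕ)} (hπ : PO (Finset.Icc 1 (2 * n)) π)
    (h : QQ n π P) (h' : QQ n π P') : P ⊆ P' := by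
  intro V hV
  obtain ⟨x, hx⟩ := h.nc.ne V hV
  obtain ⟨B, ⟨hB, hxB⟩, -⟩ := (h.PO_res hπ hV).2 x hx
  rw [mem_res] at hB
  obtain ⟨V', hV', hBV'⟩ := h'.sub B hB.1
  rw [(h.subset hπ h' hV hV' hB.1 hB.2 hBV').antisymm (h'.subset hπ h hV' hV hB.1 hBV' hB.2)]
  exact hV'

lemma QQ.unique {n : ℕ} {π P P' : Finset (Finset ℕ)} (hπ : PO (Finset.Icc 1 (2 * n)) π)
    (h : QQ n π P) (h' : QQ n π P') : P = P' :=
  (h.unique_sub hπ h').antisymm (h'.unique_sub hπ h)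

lemma side {τ : Finset (Finset ℕ)} (hτ : ConnectedPairing τ) (h2 : ∀ C ∈ τ, C.card = 2)
    {p q : ℕ} (hpq : p < q) (hd : ∀ C ∈ τ, Disjoint C {p, q}) (hc : ∀ C ∈ τ, ¬ Crosses C {p, q})
    {C D : Finset ℕ} (hC : C ∈ τ) (hD : D ∈ τ) {b d : ℕ} (hb : b ∈ C) (hdD : d ∈ D)
    (h : b ∈ Finset.Ioo p q) : d ∈ Finset.Ioo p q := by
  have key : ∀ C ∈ τ, ∀ u v : ℕ, u < v → C = {u, v} →
      ((p < u ∧ u < q) ∧ (p < v ∧ v < q)) ∨ ((u < p ∨ q < u) ∧ (v < p ∨ q < v) ) := by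
    intro C hC u v huv e
    subst e
    have h1 := hd _ hC
    have h3 := hc _ hC
    simp only [Crosses, crossAsym_iff huv hpq, crossAsym_iff hpq huv] at h3
    simp at h1
    omega
  have hall := (conn_iff τ).1 hτ (fun C => C ⊆ Finset.Ioo p q) (by
    intro C hC D hD hCp hDp hcr
    obtain ⟨u, v, huv, rfl⟩ := pair_of_card2 (h2 C hC)
    obtain ⟨u', v', huv', rfl⟩ := pair_of_card2 (h2 D hD)
    have k1 := key _ hC u v huv rfl
    have k2 := key _ hD u' v' huv' rfl
    simp only [Crosses, crossAsym_iff huv huv', crossAsym_iff huv' huv] at hcr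
    simp only [Finset.insert_subset_iff, Finset.singleton_subset_iff, Finset.mem_Ioo] at hCp hDp
    omega) C hC D hD
  refine hall ?_ hdD
  obtain ⟨u, v, huv, rfl⟩ := pair_of_card2 (h2 C hC)
  have k1 := key _ hC u v huv rfl
  simp only [Finset.insert_subset_iff, Finset.singleton_subset_iff, Finset.mem_Ioo,
    Finset.mem_insert, Finset.mem_singleton] at h hb ⊢
  omega

lemma no_interleave {σ τ : Finset (Finset ℕ)} (hσ : ConnectedPairing σ) (hτ : ConnectedPairing τ)
    (h2 : ∀ C ∈ σ, C.card = 2) (h2' : ∀ C ∈ τ, C.card = 2)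
    (hd : ∀ C ∈ τ, ∀ B ∈ σ, Disjoint C B) (hc : ∀ C ∈ τ, ∀ B ∈ σ, ¬ Crosses C B)
    {a b c d : ℕ} (hab : a < b) (hbc : b < c) (hcd : c < d)
    {A B C D : Finset ℕ} (hA : A ∈ σ) (hC : C ∈ σ) (hB : B ∈ τ) (hD : D ∈ τ)
    (ha : a ∈ A) (hb : b ∈ B) (hcC : c ∈ C) (hdD : d ∈ D) : False := by
  have key : ∀ C ∈ σ, ∀ u v : ℕ, u < v → C = {u, v} →
      ((b < u ∧ u < d) ∧ (b < v ∧ v < d)) ∨ ((u < b ∨ d < u) ∧ (v < b ∨ d < v) ) := by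
    intro C hC u v huv e
    subst e
    have s1 := side hτ h2' huv (fun E hE => hd E hE _ hC) (fun E hE => hc E hE _ hC) hB hD hb hdD
    have s2 := side hτ h2' huv (fun E hE => hd E hE _ hC) (fun E hE => hc E hE _ hC) hD hB hdD hb
    have d1 := Finset.disjoint_left.1 (hd B hB _ hC) hb
    have d2 := Finset.disjoint_left.1 (hd D hD _ hC) hdD
    simp only [Finset.mem_Ioo, Finset.mem_insert, Finset.mem_singleton] at s1 s2 d1 d2
    omega
  have hall := (conn_iff σ).1 hσ (fun C => C ⊆ Finset.Ioo b d) (by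
    intro C hC D hD hCp hDp hcr
    obtain ⟨u, v, huv, rfl⟩ := pair_of_card2 (h2 C hC)
    obtain ⟨u', v', huv', rfl⟩ := pair_of_card2 (h2 D hD)
    have k1 := key _ hC u v huv rfl
    have k2 := key _ hD u' v' huv' rfl
    simp only [Crosses, crossAsym_iff huv huv', crossAsym_iff huv' huv] at hcr
    simp only [Finset.insert_subset_iff, Finset.singleton_subset_iff, Finset.mem_Ioo] at hCp hDp
    omega) C hC A hA
  have : C ⊆ Finset.Ioo b d := by
    obtain ⟨u, v, huv, rfl⟩ := pair_of_card2 (h2 C hC)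
    have k1 := key _ hC u v huv rfl
    simp only [Finset.insert_subset_iff, Finset.singleton_subset_iff, Finset.mem_Ioo,
      Finset.mem_insert, Finset.mem_singleton] at hcC ⊢
    omega
  have := hall this ha
  simp only [Finset.mem_Ioo] at this
  omega

lemma QQ.exists {n : ℕ} {π : Finset (Finset ℕ)} (hπ : PO (Finset.Icc 1 (2 * n)) π) :
    ∃ P, QQ n π P := by
  obtain ⟨r, hr⟩ : ∃ r : Finset ℕ → Finset ℕ → Prop,
    r = fun B C => B ∈ π ∧ C ∈ π ∧ Crosses B C := ⟨_, rfl⟩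
  have rs : ∀ B C, Relation.ReflTransGen r B C → Relation.ReflTransGen r C B := by
    intro B C h
    have hsymm : ∀ B C, r B C → r C B := by
      intro B C h
      rw [hr] at h ⊢
      exact ⟨h.2.1, h.1, crosses_symm h.2.2⟩
    induction h with
    | refl => exact .refl
    | tail _ h2 ih => exact Relation.ReflTransGen.head (hsymm _ _ h2) ih
  obtain ⟨comp, hcomp⟩ : ∃ comp : Finset ℕ → Finset (Finset ℕ), ∀ B C, C ∈ comp B ↔
      C ∈ π ∧ Relation.ReflTransGen r B C :=
    ⟨fun B => π.filter (fun C => Relation.ReflTransGen r B C), fun B C => by simp⟩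
  obtain ⟨vs, hvs⟩ : ∃ vs : Finset ℕ → Finset ℕ, vs = fun B => (comp B).biUnion id := ⟨_, rfl⟩
  have mvs : ∀ B x, x ∈ vs B ↔ ∃ C ∈ comp B, x ∈ C := by intro B x; rw [hvs]; simp
  have compeq : ∀ B B' C, C ∈ comp B → C ∈ comp B' → comp B = comp B' := by
    intro B B' C h h'
    rw [hcomp] at h h'
    ext D
    rw [hcomp, hcomp]
    exact ⟨fun hD => ⟨hD.1, (h'.2.trans (rs _ _ h.2)).trans hD.2⟩,
      fun hD => ⟨hD.1, (h.2.trans (rs _ _ h'.2)).trans hD.2⟩⟩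
  have self : ∀ B ∈ π, B ∈ comp B := fun B hB => (hcomp B B).2 ⟨hB, .refl⟩
  have uq : ∀ B ∈ π, ∀ C ∈ π, ∀ x, x ∈ B → x ∈ C → B = C := by
    intro B hB C hC x hxB hxC
    exact (hπ.2 x ((hπ.1 B hB).2 hxB)).unique ⟨hB, hxB⟩ ⟨hC, hxC⟩
  have vseq : ∀ B ∈ π, ∀ B' ∈ π, ∀ x, x ∈ vs B → x ∈ vs B' → comp B = comp B' := by
    intro B hB B' hB' x hx hx'
    obtain ⟨C, hC, hxC⟩ := (mvs _ _).1 hx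
    obtain ⟨C', hC', hxC'⟩ := (mvs _ _).1 hx'
    obtain rfl := uq C ((hcomp _ _).1 hC).1 C' ((hcomp _ _).1 hC').1 x hxC hxC'
    exact compeq B B' C hC hC'
  have conn : ∀ B ∈ π, ConnectedPairing (comp B) := by
    intro B hB
    rw [conn_iff]
    intro p hp C hC D hD hpC
    rw [hcomp] at hC hD
    have hCD := (rs _ _ hC.2).trans hD.2
    have : ∀ D, Relation.ReflTransGen r C D → p D := by
      intro D h
      induction h with
      | refl => exact hpC
      | tail h1 h2 ih =>
        rw [hr] at h2
        by_contra hn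
        refine hp _ ((hcomp _ _).2 ⟨h2.1, hC.2.trans h1⟩) _
          ((hcomp _ _).2 ⟨h2.2.1, (hC.2.trans h1).tail (by rw [hr]; exact h2)⟩) ih hn h2.2.2
    exact this D hCD
  have resvs : ∀ B ∈ π, res π (vs B) = comp B := by
    intro B hB
    ext C
    rw [mem_res]
    constructor
    · rintro ⟨hC, hCs⟩
      obtain ⟨x, hx⟩ := ne_of_card2 (hπ.1 C hC).1
      obtain ⟨D, hD, hxD⟩ := (mvs _ _).1 (hCs hx)
      rwa [uq C hC D ((hcomp _ _).1 hD).1 x hx hxD]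
    · intro hC
      exact ⟨((hcomp _ _).1 hC).1, fun x hx => (mvs _ _).2 ⟨C, hC, hx⟩⟩
  have cpi : ∀ B, ∀ C ∈ comp B, C ∈ π := fun B C hC => ((hcomp _ _).1 hC).1
  refine ⟨π.image vs, ⟨?_, ?_, ?_, ?_, ?_, ?_⟩, ?_, ?_⟩
  · intro V hV x hx
    obtain ⟨B, hB, rfl⟩ := Finset.mem_image.1 hV
    obtain ⟨C, hC, hxC⟩ := (mvs _ _).1 hx
    exact (hπ.1 C (cpi _ _ hC)).2 hxC
  · intro V hV
    obtain ⟨B, hB, rfl⟩ := Finset.mem_image.1 hV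
    obtain ⟨x, hx⟩ := ne_of_card2 (hπ.1 B hB).1
    exact ⟨x, (mvs _ _).2 ⟨B, self B hB, hx⟩⟩
  · intro V hV
    obtain ⟨B, hB, rfl⟩ := Finset.mem_image.1 hV
    rw [hvs]
    simp only
    rw [Finset.card_biUnion]
    · apply Finset.even_sum
      intro C hC
      simp [(hπ.1 C (cpi _ _ hC)).1]
    · intro C hC D hD hne
      refine Finset.disjoint_left.2 ?_
      intro x hx hx'
      exact hne (uq C (cpi _ _ hC) D (cpi _ _ hD) x hx hx')
  · intro x hx
    obtain ⟨B, ⟨hB, hxB⟩, -⟩ := hπ.2 x hx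
    exact ⟨vs B, Finset.mem_image_of_mem _ hB, (mvs _ _).2 ⟨B, self B hB, hxB⟩⟩
  · intro V hV W hW x hxV hxW
    obtain ⟨B, hB, rfl⟩ := Finset.mem_image.1 hV
    obtain ⟨C, hC, rfl⟩ := Finset.mem_image.1 hW
    have := vseq B hB C hC x hxV hxW
    rw [hvs]; simp only [this]
  · intro V hV W hW a b c d hab hbc hcd haV hcV hbW hdW
    obtain ⟨B, hB, rfl⟩ := Finset.mem_image.1 hV
    obtain ⟨C, hC, rfl⟩ := Finset.mem_image.1 hW
    by_cases hBC : comp B = comp C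
    · rw [hvs]; simp only [hBC]
    exfalso
    obtain ⟨A1, hA1, h1⟩ := (mvs _ _).1 haV
    obtain ⟨A2, hA2, h2⟩ := (mvs _ _).1 hbW
    obtain ⟨A3, hA3, h3⟩ := (mvs _ _).1 hcV
    obtain ⟨A4, hA4, h4⟩ := (mvs _ _).1 hdW
    refine no_interleave (conn B hB) (conn C hC) (fun D hD => (hπ.1 D (cpi _ _ hD)).1)
      (fun D hD => (hπ.1 D (cpi _ _ hD)).1) ?_ ?_ hab hbc hcd hA1 hA3 hA2 hA4 h1 h2 h3 h4
    · intro D hD E hE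
      rw [Finset.disjoint_left]
      intro x hx hx'
      obtain rfl := uq D (cpi _ _ hD) E (cpi _ _ hE) x hx hx'
      exact hBC (compeq _ _ _ hE hD)
    · intro D hD E hE hcr
      refine hBC (compeq _ _ E hE ((hcomp _ _).2 ⟨cpi _ _ hE, ((hcomp _ _).1 hD).2.tail ?_⟩))
      rw [hr]
      exact ⟨cpi _ _ hD, cpi _ _ hE, hcr⟩
  · intro B hB
    exact ⟨vs B, Finset.mem_image_of_mem _ hB, fun x hx => (mvs _ _).2 ⟨B, self B hB, hx⟩⟩
  · intro V hV
    obtain ⟨B, hB, rfl⟩ := Finset.mem_image.1 hV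
    rw [resvs B hB]
    exact conn B hB

lemma crNum_sum {n : ℕ} {π P : Finset (Finset ℕ)} (h2 : ∀ B ∈ π, B.card = 2)
    (hP : NC n P) (hs : ∀ B ∈ π, ∃ V ∈ P, B ⊆ V) : crNum π = ∑ V ∈ P, crNum (res π V) := by
  simp only [crNum_eq]
  rw [← Finset.card_biUnion]
  · congr 1
    ext ⟨B, C⟩
    simp only [XX, Finset.mem_filter, Finset.mem_product, Finset.mem_biUnion, mem_res]
    constructor
    · rintro ⟨⟨hB, hC⟩, hc⟩
      obtain ⟨V, hV, hBV⟩ := hs B hB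
      obtain ⟨W, hW, hCW⟩ := hs C hC
      obtain rfl := hP.no_crossA hV hW hBV hCW hc
      exact ⟨V, hV, ⟨⟨hB, hBV⟩, hC, hCW⟩, hc⟩
    · rintro ⟨V, hV, ⟨⟨hB, hBV⟩, hC, hCW⟩, hc⟩
      exact ⟨⟨hB, hC⟩, hc⟩
  · intro V hV W hW hne
    refine Finset.disjoint_left.2 ?_
    rintro ⟨B, C⟩ h h'
    simp only [XX, Finset.mem_filter, Finset.mem_product, mem_res] at h h'
    exact hne (hP.sub_eq hV hW (h2 B h.1.1.1) h.1.1.2 h'.1.1.2)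

/-! main count -/

noncomputable def RR (n k : ℕ) : Finset (Finset (Finset ℕ)) :=
  (Finset.Icc 1 (2 * n)).powerset.powerset.filter
    (fun π => PO (Finset.Icc 1 (2 * n)) π ∧ ParityReversing π ∧ crNum π = k)

lemma mem_RR {n k : ℕ} {π : Finset (Finset ℕ)} :
    π ∈ RR n k ↔ PO (Finset.Icc 1 (2 * n)) π ∧ ParityReversing π ∧ crNum π = k := by
  rw [RR, Finset.mem_filter]
  exact ⟨fun h => h.2, fun h => ⟨h.1.mem_pow, h⟩⟩

lemma rCount_eq (n k : ℕ) : rCount n k = (RR n k).card := by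
  rw [rCount, ← Set.ncard_coe_finset]
  congr 1
  ext p
  simp only [Set.mem_ofPred_eq, Finset.mem_coe, mem_RR]
  rfl

noncomputable def FF (n k : ℕ) (P : Finset (Finset ℕ)) : Finset (Finset (Finset ℕ)) :=
  (RR n k).filter (fun π => QQ n π P)

lemma rCount_sum (n k : ℕ) : rCount n k = ∑ P ∈ NCEvenPartitions n, (FF n k P).card := by
  rw [rCount_eq, ← Finset.card_biUnion]
  · congr 1
    ext π
    simp only [FF, Finset.mem_biUnion, Finset.mem_filter, mem_NCE]
    constructor
    · intro h
      obtain ⟨P, hP⟩ := QQ.exists (mem_RR.1 h).1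
      exact ⟨P, hP.nc, h, hP⟩
    · rintro ⟨P, hP, h, -⟩; exact h
  · intro P hP P' hP' hne
    refine Finset.disjoint_left.2 ?_
    intro π h h'
    simp only [FF, Finset.mem_filter] at h h'
    exact hne (h.2.unique (mem_RR.1 h.1).1 h'.2)

lemma glue {n k : ℕ} {P : Finset (Finset ℕ)} (hP : NC n P) (κ : ∀ B ∈ P, ℕ)
    (hκ : ∑ B ∈ P.attach, κ B.1 B.2 = k)
    (f : {x // x ∈ P} → Finset (Finset ℕ)) (hf : ∀ V, f V ∈ SS V.1 (κ V.1 V.2)) :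
    ∃ π ∈ FF n k P, ∀ V : {x // x ∈ P}, res π V.1 = f V := by
  have hm : ∀ V, _ := fun V => mem_SS.1 (hf V)
  have hmem : ∀ B, B ∈ P.attach.biUnion f ↔ ∃ V, B ∈ f V := by
    intro B; simp
  have hres : ∀ V : {x // x ∈ P}, res (P.attach.biUnion f) V.1 = f V := by
    intro V
    ext B
    rw [mem_res, hmem]
    constructor
    · rintro ⟨⟨W, hW⟩, hB⟩
      have h1 := (hm W).1.1 B hW
      have : V = W := Subtype.ext (hP.sub_eq V.2 W.2 h1.1 hB h1.2)
      rwa [this]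
    · intro h
      exact ⟨⟨V, h⟩, ((hm V).1.1 B h).2⟩
  refine ⟨P.attach.biUnion f, ?_, hres⟩
  have h2 : ∀ B ∈ P.attach.biUnion f, B.card = 2 := by
    intro B hB
    obtain ⟨V, hV⟩ := (hmem B).1 hB
    exact ((hm V).1.1 B hV).1
  have hs : ∀ B ∈ P.attach.biUnion f, ∃ V ∈ P, B ⊆ V := by
    intro B hB
    obtain ⟨V, hV⟩ := (hmem B).1 hB
    exact ⟨V.1, V.2, ((hm V).1.1 B hV).2⟩
  simp only [FF, Finset.mem_filter, mem_RR]
  refine ⟨⟨⟨fun B hB => ⟨h2 B hB, ?_⟩, fun x hx => ?_⟩, ?_, ?_⟩, hP, hs, ?_⟩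
  · obtain ⟨V, hV, hBV⟩ := hs B hB
    exact hBV.trans (hP.sub V hV)
  · obtain ⟨V, hV, hxV⟩ := hP.ex x hx
    obtain ⟨B, ⟨hB, hxB⟩, hu⟩ := (hm ⟨V, hV⟩).1.2 x hxV
    refine ⟨B, ⟨(hmem B).2 ⟨_, hB⟩, hxB⟩, ?_⟩
    rintro C ⟨hC, hxC⟩
    obtain ⟨W, hW⟩ := (hmem C).1 hC
    have : W = ⟨V, hV⟩ := Subtype.ext (hP.un W.1 W.2 V hV x (((hm W).1.1 C hW).2 hxC) hxV)
    subst this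
    exact hu C ⟨hW, hxC⟩
  · intro B hB
    obtain ⟨V, hV⟩ := (hmem B).1 hB
    exact (hm V).2.1 B hV
  · rw [crNum_sum h2 hP hs, ← hκ, ← Finset.sum_attach]
    refine Finset.sum_congr rfl fun V _ => ?_
    rw [hres V]
    exact (hm V).2.2.2
  · intro V hV
    rw [hres ⟨V, hV⟩]
    exact (hm ⟨V, hV⟩).2.2.1

lemma FF_fiber {n k : ℕ} {P : Finset (Finset ℕ)} (hP : NC n P) (κ : ∀ B ∈ P, ℕ)
    (hκ : ∑ B ∈ P.attach, κ B.1 B.2 = k) :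
    ((FF n k P).filter (fun π => (fun B (_ : B ∈ P) => crNum (res π B)) = κ)).card =
      ∏ B ∈ P.attach, bCount (B.1.card / 2) (κ B.1 B.2) := by
  have h1 : ∏ B ∈ P.attach, bCount (B.1.card / 2) (κ B.1 B.2) =
      (Fintype.piFinset (fun B : {x // x ∈ P} => SS B.1 (κ B.1 B.2))).card := by
    rw [Fintype.card_piFinset, Finset.univ_eq_attach]
    exact Finset.prod_congr rfl fun B _ => (SS_card hP B.2 _).symm
  rw [h1]
  apply Finset.card_nbij (fun π V => res π V.1)
  · intro π hπ
    simp only [FF, Finset.coe_filter, Set.mem_ofPred_eq, Finset.mem_filter, mem_RR] at hπ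
    obtain ⟨⟨⟨h1, h2, h3⟩, h4⟩, h5⟩ := hπ
    simp only [Finset.mem_coe, Fintype.mem_piFinset, mem_SS]
    intro V
    refine ⟨h4.PO_res h1 V.2, fun B hB => h2 B (mem_res.1 hB).1, h4.conn V.1 V.2, ?_⟩
    rw [← h5]
  · have key : ∀ π ∈ FF n k P, ∀ ρ : Finset (Finset ℕ),
        ((fun V : {x // x ∈ P} => res π V.1) = fun V => res ρ V.1) → π ⊆ ρ := by
      intro π hπ ρ h B hB
      simp only [FF, Finset.mem_filter] at hπ
      obtain ⟨V, hV, hBV⟩ := hπ.2.sub B hB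
      have h6 := congrFun h ⟨V, hV⟩
      have : B ∈ res ρ V := by rw [← h6]; exact mem_res.2 ⟨hB, hBV⟩
      exact (mem_res.1 this).1
    intro π hπ ρ hρ h
    simp only [Finset.coe_filter, Set.mem_ofPred_eq] at hπ hρ
    exact (key π hπ.1 ρ h).antisymm (key ρ hρ.1 π h.symm)
  · intro f hf
    simp only [Finset.mem_coe, Fintype.mem_piFinset] at hf
    obtain ⟨π, hπ, hres⟩ := glue hP κ hκ f hf
    refine ⟨π, ?_, funext hres⟩
    simp only [Finset.coe_filter, Set.mem_ofPred_eq]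
    refine ⟨hπ, ?_⟩
    funext B hB
    rw [hres ⟨B, hB⟩]
    exact (mem_SS.1 (hf ⟨B, hB⟩)).2.2.2

/-- Crossing-refined decomposition into connected components:
`r_{n,k} = ∑_{{V_1,…,V_ℓ} ∈ NC_even(2n)} ∑_{k_1+⋯+k_ℓ = k} b_{|V_1|/2,k_1} ⋯ b_{|V_ℓ|/2,k_ℓ}`. -/
theorem rCount_eq_sum_ncEven_sum_prod_bCount (n k : ℕ) (hn : 1 ≤ n) :
    rCount n k = ∑ π ∈ NCEvenPartitions n,
      ∑ κ ∈ (Finset.pi π (fun _ => Finset.range (k + 1))).filter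
          (fun κ => (∑ B ∈ π.attach, κ B.1 B.2) = k),
        ∏ B ∈ π.attach, bCount (B.1.card / 2) (κ B.1 B.2) := by
  rw [rCount_sum]
  refine Finset.sum_congr rfl fun P hP => ?_
  rw [mem_NCE] at hP
  rw [Finset.card_eq_sum_card_fiberwise (f := fun π => (fun B (_ : B ∈ P) => crNum (res π B)))
    (t := (Finset.pi P (fun _ => Finset.range (k + 1))).filter
          (fun κ => (∑ B ∈ P.attach, κ B.1 B.2) = k))]
  · refine Finset.sum_congr rfl fun κ hκ => ?_
    rw [Finset.mem_filter] at hκ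
    exact FF_fiber hP κ hκ.2
  · intro π hπ
    simp only [FF, Finset.coe_filter, Set.mem_ofPred_eq, mem_RR] at hπ
    obtain ⟨⟨h1, h2, h3⟩, h4⟩ := hπ
    have hsum := crNum_sum (fun B hB => (h1.1 B hB).1) h4.nc h4.sub
    rw [h3] at hsum
    simp only [Finset.coe_filter, Set.mem_ofPred_eq, Finset.mem_pi, Finset.mem_range]
    refine ⟨fun B hB => ?_, ?_⟩
    · have := Finset.single_le_sum (f := fun V => crNum (res π V)) (fun _ _ => Nat.zero_le _) hB
      omega
    · rw [hsum]
      exact Finset.sum_attach P (fun V => crNum (res π V))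
end

section
/- For every even n ≥ 2, every parity-reversing pairing on [2n] has at most n(n−2)/2 crossings; in particular r_{n,k} = 0 for all k > n(n−2)/2. -/
open scoped Classical

theorem my_pair_eq {a b c d : ℕ} (h1 : a < b) (h2 : c < d)
    (h : ({a, b} : Finset ℕ) = {c, d}) : a = c ∧ b = d := by
  have ha : a ∈ ({c, d} : Finset ℕ) := by rw [← h]; simp
  have hb : b ∈ ({c, d} : Finset ℕ) := by rw [← h]; simp
  have hc : c ∈ ({a, b} : Finset ℕ) := by rw [h]; simp
  have hd : d ∈ ({a, b} : Finset ℕ) := by rw [h]; simp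
  simp only [Finset.mem_insert, Finset.mem_singleton] at ha hb hc hd
  omega

theorem my_asymm {B C : Finset ℕ} (h : CrossAsym B C) : ¬ CrossAsym C B := by
  rintro ⟨a', b', c', d', h1', h2', h3', hC', hB'⟩
  obtain ⟨a, b, c, d, h1, h2, h3, rfl, rfl⟩ := h
  have := my_pair_eq (by omega) (by omega) hC'
  have := my_pair_eq (by omega) (by omega) hB'
  omega

/-- Crossing blocks have one element inside and one outside. -/
theorem my_cross {a b : ℕ} (hab : a < b) {C : Finset ℕ} (h : Crosses {a, b} C) :
    (∃ x ∈ C, a < x ∧ x < b) ∧ (∃ x ∈ C, x < a ∨ b < x) := by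
  rcases h with ⟨a', b', c, d, h1, h2, h3, hB, rfl⟩ | ⟨c, d, a', b', h1, h2, h3, rfl, hB⟩
  · obtain ⟨rfl, rfl⟩ := my_pair_eq hab (by omega) hB
    exact ⟨⟨c, by simp, h1, h2⟩, ⟨d, by simp, Or.inr h3⟩⟩
  · obtain ⟨rfl, rfl⟩ := my_pair_eq hab (by omega) hB
    exact ⟨⟨d, by simp, h2, h3⟩, ⟨c, by simp, Or.inl h1⟩⟩

theorem my_deg (n : ℕ) (hn : 2 ≤ n) (heven : Even n) (π : Finset (Finset ℕ))
    (hp : IsPairing n π) (hr : ParityReversing π) (B : Finset ℕ) (hB : B ∈ π) :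
    (π.filter (fun C => Crosses B C)).card ≤ n - 2 := by
  obtain ⟨a, b, hab, hpar, rfl⟩ : ∃ a b : ℕ, a < b ∧ (b - a) % 2 = 1 ∧ B = {a, b} := by
    obtain ⟨a, b, rfl, ⟨i, hi⟩, ⟨j, hj⟩⟩ := hr B hB
    rcases lt_trichotomy a b with h | h | h
    · exact ⟨a, b, h, by omega, rfl⟩
    · omega
    · exact ⟨b, a, h, by omega, Finset.pair_comm _ _⟩
  have hsub := (hp.1 _ hB).2
  have ha : a ∈ Finset.Icc 1 (2 * n) := hsub (by simp)
  have hb : b ∈ Finset.Icc 1 (2 * n) := hsub (by simp)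
  have key : ∀ t : Finset ℕ, t ⊆ Finset.Icc 1 (2 * n) →
      (∀ C ∈ π, Crosses {a, b} C → ∃ x ∈ t, x ∈ C) →
      (π.filter (fun C => Crosses {a, b} C)).card ≤ t.card := by
    intro t ht h
    apply Finset.card_le_card_of_forall_subsingleton (fun C x => x ∈ C)
    · intro C hC
      rw [Finset.mem_filter] at hC
      exact h C hC.1 hC.2
    · rintro x hx C ⟨hC, hxC⟩ D ⟨hD, hxD⟩
      exact (hp.2 x (ht hx)).unique ⟨(Finset.mem_filter.1 hC).1, hxC⟩
        ⟨(Finset.mem_filter.1 hD).1, hxD⟩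
  have hI : Finset.Icc a b ⊆ Finset.Icc 1 (2 * n) := by
    intro x hx
    simp only [Finset.mem_Icc] at *
    omega
  have k1 := key (Finset.Ioo a b) (Finset.Ioo_subset_Icc_self.trans hI) (by
    intro C _ hc
    obtain ⟨x, hx, h⟩ := (my_cross hab hc).1
    exact ⟨x, by simpa using h, hx⟩)
  have k2 := key (Finset.Icc 1 (2 * n) \ Finset.Icc a b) Finset.sdiff_subset (by
    intro C hC hc
    obtain ⟨x, hx, h⟩ := (my_cross hab hc).2
    refine ⟨x, ?_, hx⟩
    rw [Finset.mem_sdiff]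
    refine ⟨(hp.1 C hC).2 hx, ?_⟩
    rw [Finset.mem_Icc]
    omega)
  rw [Finset.card_sdiff_of_subset hI] at k2
  simp only [Nat.card_Icc, Nat.card_Ioo, Finset.mem_Icc] at *
  obtain ⟨m, hm⟩ := heven
  omega

theorem my_card (n : ℕ) (π : Finset (Finset ℕ)) (hp : IsPairing n π) : π.card ≤ n := by
  have := Finset.card_mul_le_card_mul (s := π) (t := Finset.Icc 1 (2 * n))
    (fun B x => x ∈ B) (m := 2) (n := 1) (by
      intro B hB
      refine (hp.1 B hB).1.symm.le.trans ?_
      apply Finset.card_le_card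
      intro x hx
      simp only [Finset.mem_bipartiteAbove]
      exact ⟨(hp.1 B hB).2 hx, hx⟩) (by
      intro x hx
      rw [Finset.card_le_one]
      intro C hC D hD
      simp only [Finset.mem_bipartiteBelow] at hC hD
      exact (hp.2 x hx).unique hC hD)
  simp only [Nat.card_Icc] at this
  omega

theorem my_main (n : ℕ) (hn : 2 ≤ n) (heven : Even n) (π : Finset (Finset ℕ))
    (hp : IsPairing n π) (hr : ParityReversing π) : crNum π ≤ n * (n - 2) / 2 := by
  have e : crNum π = ∑ B ∈ π, (π.filter (fun C => CrossAsym B C)).card := by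
    have : {p : Finset ℕ × Finset ℕ | p.1 ∈ π ∧ p.2 ∈ π ∧ CrossAsym p.1 p.2} =
        (((π ×ˢ π).filter (fun p => CrossAsym p.1 p.2) : Finset _) : Set _) := by
      ext p
      simp [and_assoc]
    rw [crNum, this, Set.ncard_coe_finset, Finset.card_filter, Finset.sum_product]
    simp only [Finset.card_filter]
  have e2 : crNum π = ∑ B ∈ π, (π.filter (fun C => CrossAsym C B)).card := by
    rw [e]
    exact Finset.sum_card_bipartiteAbove_eq_sum_card_bipartiteBelow _
  have h : crNum π + crNum π ≤ π.card * (n - 2) := by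
    nth_rewrite 1 [e]
    rw [e2, ← Finset.sum_add_distrib, ← smul_eq_mul]
    apply Finset.sum_le_card_nsmul
    intro B hB
    rw [← Finset.card_union_of_disjoint, ← Finset.filter_or]
    · refine le_trans (Finset.card_le_card ?_) (my_deg n hn heven π hp hr B hB)
      intro C hC
      rw [Finset.mem_filter] at hC ⊢
      exact hC
    · rw [Finset.disjoint_filter]
      intro C _ h
      exact my_asymm h
  have := Nat.mul_le_mul_right (n - 2) (my_card n π hp)
  omega

/-- For even `n ≥ 2`, every parity-reversing pairing on `[2n]` has at most `n(n−2)/2`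
crossings; in particular `r_{n,k} = 0` for `k > n(n−2)/2`. -/
theorem rCount_max_crossings_even (n : ℕ) (hn : 2 ≤ n) (heven : Even n) :
    (∀ π : Finset (Finset ℕ), IsPairing n π → ParityReversing π →
      crNum π ≤ n * (n - 2) / 2) ∧
    (∀ k : ℕ, n * (n - 2) / 2 < k → rCount n k = 0) := by
  refine ⟨my_main n hn heven, ?_⟩
  intro k hk
  have : {π : Finset (Finset ℕ) | IsPairing n π ∧ ParityReversing π ∧ crNum π = k} = ∅ := by
    ext π
    simp only [Set.mem_ofPred_eq, Set.mem_empty_iff_false, iff_false]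
    rintro ⟨h1, h2, h3⟩
    have := my_main n hn heven π h1 h2
    omega
  rw [rCount, this, Set.ncard_empty]
end
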